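/- For all real a > 0 and b > 0, letting q(x) = a·b·x^{a−1}·(1 − x^a)^{b−1} denote the Kumaraswamy(a,b) density, ∫₀¹ q(x)·log q(x) dx = log(a·b) − ((a−1)/a)·(γ + ψ(b) + 1/b) − (b−1)/b, where γ is the Euler–Mascheroni constant and ψ(b) is the derivative of log Γ at b. Equivalently, the differential entropy of the Kumaraswamy(a,b) distribution equals −log(a·b) + ((a−1)/a)·(γ + ψ(b) + 1/b) + (b−1)/b. -/

import Mathlib

open Real

/-- The digamma function `ψ`, the derivative of `log ∘ Γ`. -/
noncomputable def digamma (x : ℝ) : ℝ := deriv (fun y => Real.log (Real.Gamma y)) x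

/-- The Kumaraswamy(a, b) density `q`. -/
noncomputable def kumaraswamyPdf (a b x : ℝ) : ℝ :=
  a * b * x ^ (a - 1) * (1 - x ^ a) ^ (b - 1)

open MeasureTheory Set Filter Topology

theorem hasDerivAt_Gamma_digamma {x : ℝ} (hx : 0 < x) :
    HasDerivAt Real.Gamma (digamma x * Real.Gamma x) x := by
  have hd : DifferentiableAt ℝ Real.Gamma x :=
    Real.differentiableAt_Gamma fun m hm => by
      have : (0 : ℝ) ≤ m := m.cast_nonneg
      linarith
  have hG := (Real.Gamma_pos_of_pos hx).ne'
  have h : digamma x = deriv Real.Gamma x / Real.Gamma x :=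
    (hd.hasDerivAt.log hG).deriv
  rw [h, div_mul_cancel₀ _ hG]
  exact hd.hasDerivAt

theorem digamma_one : digamma 1 = -Real.eulerMascheroniConstant := by
  have h := (hasDerivAt_Gamma_digamma one_pos).unique Real.hasDerivAt_Gamma_one
  simpa using h

theorem digamma_add_one {x : ℝ} (hx : 0 < x) : digamma (x + 1) = digamma x + 1 / x := by
  have hG := (Real.Gamma_pos_of_pos hx).ne'
  have h₁ : HasDerivAt (fun y => Real.Gamma (y + 1)) (digamma (x + 1) * Real.Gamma (x + 1)) x :=
    (hasDerivAt_Gamma_digamma (by positivity : 0 < x + 1)).comp_add_const x 1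
  have h₂ : HasDerivAt (fun y => Real.Gamma (y + 1))
      (1 * Real.Gamma x + x * (digamma x * Real.Gamma x)) x := by
    refine ((hasDerivAt_id x).mul (hasDerivAt_Gamma_digamma hx)).congr_of_eventuallyEq ?_
    filter_upwards [eventually_ne_nhds hx.ne'] with y hy
    exact Real.Gamma_add_one hy
  have h := h₁.unique h₂
  rw [Real.Gamma_add_one hx.ne'] at h
  field_simp
  apply mul_right_cancel₀ hG
  linear_combination h

theorem ofReal_beta_integrand {u v t : ℝ} (ht : t ∈ Ioo (0 : ℝ) 1) :
    ((t ^ (u - 1) * (1 - t) ^ (v - 1) : ℝ) : ℂ) =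
      (t : ℂ) ^ ((u : ℂ) - 1) * (1 - (t : ℂ)) ^ ((v : ℂ) - 1) := by
  rw [Complex.ofReal_mul, Complex.ofReal_cpow ht.1.le, Complex.ofReal_cpow (sub_pos.2 ht.2).le]
  push_cast
  rfl

theorem integrableOn_beta_integrand {u v : ℝ} (hu : 0 < u) (hv : 0 < v) :
    IntegrableOn (fun t : ℝ => t ^ (u - 1) * (1 - t) ^ (v - 1)) (Ioo 0 1) := by
  have h := Complex.betaIntegral_convergent (u := u) (v := v) (by simpa) (by simpa)
  rw [intervalIntegrable_iff_integrableOn_Ioo_of_le zero_le_one] at h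
  refine IntegrableOn.congr_fun (Integrable.re h) (fun t ht => ?_) measurableSet_Ioo
  simp only [← ofReal_beta_integrand ht]
  exact Complex.ofReal_re _

theorem setIntegral_beta_integrand {u v : ℝ} (hu : 0 < u) (hv : 0 < v) :
    ∫ t in Ioo (0 : ℝ) 1, t ^ (u - 1) * (1 - t) ^ (v - 1) =
      Real.Gamma u * Real.Gamma v / Real.Gamma (u + v) := by
  have h := Complex.betaIntegral_eq_Gamma_mul_div (u : ℂ) v (by simpa) (by simpa)
  rw [Complex.betaIntegral, intervalIntegral.integral_of_le zero_le_one,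
    integral_Ioc_eq_integral_Ioo,
    ← setIntegral_congr_fun measurableSet_Ioo (fun t ht => ofReal_beta_integrand ht),
    integral_complex_ofReal, ← Complex.ofReal_add] at h
  simp only [Complex.Gamma_ofReal] at h
  exact_mod_cast h

/-- Differentiating the beta integral in its first parameter. -/
theorem setIntegral_log_mul_beta_integrand {u v : ℝ} (hu : 0 < u) (hv : 0 < v) :
    IntegrableOn (fun t : ℝ => log t * (t ^ (u - 1) * (1 - t) ^ (v - 1))) (Ioo 0 1) ∧
    ∫ t in Ioo (0 : ℝ) 1, log t * (t ^ (u - 1) * (1 - t) ^ (v - 1)) =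
      Real.Gamma u * Real.Gamma v / Real.Gamma (u + v) * (digamma u - digamma (u + v)) := by
  have key := hasDerivAt_integral_of_dominated_loc_of_deriv_le
    (μ := volume.restrict (Ioo (0 : ℝ) 1)) (x₀ := u) (s := Ioi (u / 2))
    (F := fun s t => t ^ (s - 1) * (1 - t) ^ (v - 1))
    (F' := fun s t => log t * (t ^ (s - 1) * (1 - t) ^ (v - 1)))
    (bound := fun t => 1 / (u / 4) * (t ^ (u / 4 - 1) * (1 - t) ^ (v - 1)))
    (Ioi_mem_nhds (by linarith))
    (Eventually.of_forall fun s => by fun_prop)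
    (integrableOn_beta_integrand hu hv) (by fun_prop)
    (by
      filter_upwards [ae_restrict_mem measurableSet_Ioo] with t ht s hs
      have hs : u / 2 < s := hs
      have h1 : 0 ≤ (1 - t) ^ (v - 1) := rpow_nonneg (sub_pos.2 ht.2).le _
      have h2 : t ^ (s - 1) ≤ t ^ (u / 4) * t ^ (u / 4 - 1) := by
        rw [← rpow_add ht.1]
        exact rpow_le_rpow_of_exponent_ge ht.1 ht.2.le (by linarith)
      have h3 := (abs_log_mul_self_rpow_lt t (u / 4) ht.1 ht.2.le (by positivity)).le
      have h4 : 0 ≤ t ^ (u / 4 - 1) := rpow_nonneg ht.1.le _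
      rw [abs_mul, abs_of_nonneg (rpow_nonneg ht.1.le _)] at h3
      rw [norm_mul, norm_eq_abs, norm_of_nonneg (mul_nonneg (rpow_nonneg ht.1.le _) h1)]
      calc |log t| * (t ^ (s - 1) * (1 - t) ^ (v - 1))
          ≤ |log t| * (t ^ (u / 4) * t ^ (u / 4 - 1) * (1 - t) ^ (v - 1)) := by gcongr
        _ = |log t| * t ^ (u / 4) * (t ^ (u / 4 - 1) * (1 - t) ^ (v - 1)) := by ring
        _ ≤ _ := by gcongr)
    ((integrableOn_beta_integrand (by positivity : 0 < u / 4) hv).const_mul _)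
    (by
      filter_upwards [ae_restrict_mem measurableSet_Ioo] with t ht s _
      have h := (((hasDerivAt_id s).sub_const 1).const_rpow ht.1).mul_const ((1 - t) ^ (v - 1))
      convert! h using 1
      simp only [id]
      ring)
  refine ⟨key.1, key.2.unique ?_⟩
  have huv : 0 < u + v := by positivity
  have hG := (Real.Gamma_pos_of_pos huv).ne'
  have h := ((hasDerivAt_Gamma_digamma hu).mul_const (Real.Gamma v)).div
    ((hasDerivAt_Gamma_digamma huv).comp_add_const u v) hG
  refine (h.congr_of_eventuallyEq ?_).congr_deriv ?_
  · filter_upwards [Ioi_mem_nhds hu] with s hs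
    exact setIntegral_beta_integrand hs hv
  · field_simp

theorem setIntegral_Ioo_one_sub (f : ℝ → ℝ) :
    ∫ t in Ioo (0 : ℝ) 1, f (1 - t) = ∫ t in Ioo (0 : ℝ) 1, f t := by
  simp only [← integral_Ioc_eq_integral_Ioo, ← intervalIntegral.integral_of_le zero_le_one]
  simp

theorem integrableOn_Ioo_one_sub {f : ℝ → ℝ} (hf : IntegrableOn f (Ioo 0 1)) :
    IntegrableOn (fun t => f (1 - t)) (Ioo 0 1) := by
  rw [← intervalIntegrable_iff_integrableOn_Ioo_of_le zero_le_one] at hf ⊢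
  simpa using (hf.comp_sub_left 1).symm

theorem setIntegral_Ioo_comp_rpow {a : ℝ} (ha : 0 < a) (g : ℝ → ℝ) :
    ∫ x in Ioo (0 : ℝ) 1, a * x ^ (a - 1) * g (x ^ a) = ∫ t in Ioo (0 : ℝ) 1, g t := by
  have h := integral_comp_rpow_Ioi_of_pos (g := (Iio (1 : ℝ)).indicator g) ha
  rw [setIntegral_indicator measurableSet_Iio, Ioi_inter_Iio] at h
  rw [← h, ← Ioi_inter_Iio, ← setIntegral_indicator measurableSet_Iio]
  refine setIntegral_congr_fun measurableSet_Ioi fun x hx => ?_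
  by_cases hx1 : x < 1
  · simp [hx1, rpow_lt_one (le_of_lt hx) hx1 ha]
  · simp [hx1, one_le_rpow (not_lt.1 hx1) ha.le]

theorem setIntegral_one_sub_rpow {b : ℝ} (hb : 0 < b) :
    IntegrableOn (fun t : ℝ => (1 - t) ^ (b - 1)) (Ioo 0 1) ∧
    ∫ t in Ioo (0 : ℝ) 1, (1 - t) ^ (b - 1) = 1 / b := by
  have h₁ := integrableOn_beta_integrand one_pos hb
  have h₂ := setIntegral_beta_integrand one_pos hb
  have hG := (Real.Gamma_pos_of_pos hb).ne'
  rw [add_comm, Real.Gamma_add_one hb.ne'] at h₂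
  simp only [sub_self, rpow_zero, one_mul, Real.Gamma_one] at h₁ h₂
  refine ⟨h₁, h₂.trans ?_⟩
  field_simp

theorem setIntegral_log_mul_one_sub_rpow {b : ℝ} (hb : 0 < b) :
    IntegrableOn (fun t : ℝ => log t * (1 - t) ^ (b - 1)) (Ioo 0 1) ∧
    ∫ t in Ioo (0 : ℝ) 1, log t * (1 - t) ^ (b - 1) =
      -(1 / b) * (Real.eulerMascheroniConstant + digamma b + 1 / b) := by
  obtain ⟨h₁, h₂⟩ := setIntegral_log_mul_beta_integrand one_pos hb
  have hG := (Real.Gamma_pos_of_pos hb).ne'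
  rw [add_comm 1 b, Real.Gamma_add_one hb.ne', digamma_one, digamma_add_one hb] at h₂
  simp only [sub_self, rpow_zero, one_mul, Real.Gamma_one] at h₁ h₂
  refine ⟨h₁, h₂.trans ?_⟩
  field_simp
  ring

theorem setIntegral_log_one_sub_mul_one_sub_rpow {b : ℝ} (hb : 0 < b) :
    IntegrableOn (fun t : ℝ => log (1 - t) * (1 - t) ^ (b - 1)) (Ioo 0 1) ∧
    ∫ t in Ioo (0 : ℝ) 1, log (1 - t) * (1 - t) ^ (b - 1) = -(1 / b ^ 2) := by
  obtain ⟨h₁, h₂⟩ := setIntegral_log_mul_beta_integrand hb one_pos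
  have hG := (Real.Gamma_pos_of_pos hb).ne'
  rw [Real.Gamma_add_one hb.ne', digamma_add_one hb] at h₂
  simp only [sub_self, rpow_zero, mul_one, Real.Gamma_one] at h₁ h₂
  refine ⟨integrableOn_Ioo_one_sub h₁,
    (setIntegral_Ioo_one_sub fun t => log t * t ^ (b - 1)).trans (h₂.trans ?_)⟩
  field_simp
  ring

theorem kumaraswamyPdf_mul_log {a b x : ℝ} (ha : 0 < a) (hb : 0 < b) (hx : x ∈ Ioo (0 : ℝ) 1) :
    kumaraswamyPdf a b x * log (kumaraswamyPdf a b x) =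
      a * x ^ (a - 1) * (b * log (a * b) * (1 - x ^ a) ^ (b - 1)
        + b * ((a - 1) / a) * (log (x ^ a) * (1 - x ^ a) ^ (b - 1))
        + b * (b - 1) * (log (1 - x ^ a) * (1 - x ^ a) ^ (b - 1))) := by
  have h₁ : 0 < x ^ (a - 1) := rpow_pos_of_pos hx.1 _
  have h₂ : 0 < 1 - x ^ a := sub_pos.2 (rpow_lt_one hx.1.le hx.2 ha)
  have h₃ : 0 < (1 - x ^ a) ^ (b - 1) := rpow_pos_of_pos h₂ _
  rw [kumaraswamyPdf, log_mul (by positivity) h₃.ne', log_mul (by positivity) h₁.ne',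
    log_rpow hx.1, log_rpow h₂, log_rpow hx.1]
  field_simp

theorem integral_kumaraswamyPdf_mul_log {a b : ℝ} (ha : 0 < a) (hb : 0 < b) :
    ∫ x in (0 : ℝ)..1, kumaraswamyPdf a b x * log (kumaraswamyPdf a b x) =
      log (a * b) - ((a - 1) / a) * (Real.eulerMascheroniConstant + digamma b + 1 / b)
        - (b - 1) / b := by
  obtain ⟨hi₁, he₁⟩ := setIntegral_one_sub_rpow hb
  obtain ⟨hi₂, he₂⟩ := setIntegral_log_mul_one_sub_rpow hb
  obtain ⟨hi₃, he₃⟩ := setIntegral_log_one_sub_mul_one_sub_rpow hb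
  rw [intervalIntegral.integral_of_le zero_le_one, integral_Ioc_eq_integral_Ioo,
    setIntegral_congr_fun measurableSet_Ioo fun x hx => kumaraswamyPdf_mul_log ha hb hx,
    setIntegral_Ioo_comp_rpow ha fun t => b * log (a * b) * (1 - t) ^ (b - 1)
      + b * ((a - 1) / a) * (log t * (1 - t) ^ (b - 1))
      + b * (b - 1) * (log (1 - t) * (1 - t) ^ (b - 1)),
    integral_add ((hi₁.const_mul _).fun_add (hi₂.const_mul _)) (hi₃.const_mul _),
    integral_add (hi₁.const_mul _) (hi₂.const_mul _),
    integral_const_mul, integral_const_mul, integral_const_mul, he₁, he₂, he₃]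
  field_simp
  ring

/-- Negative differential entropy of the Kumaraswamy(a, b) distribution:
`∫₀¹ q log q = log(ab) - ((a-1)/a)(γ + ψ(b) + 1/b) - (b-1)/b`; equivalently,
the differential entropy `-∫₀¹ q log q` equals
`-log(ab) + ((a-1)/a)(γ + ψ(b) + 1/b) + (b-1)/b`. -/
theorem kumaraswamy_entropy (a b : ℝ) (ha : 0 < a) (hb : 0 < b) :
    (∫ x in (0:ℝ)..1, kumaraswamyPdf a b x * Real.log (kumaraswamyPdf a b x)
      = Real.log (a * b)
        - ((a - 1)/a) * (Real.eulerMascheroniConstant + digamma b + 1/b)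
        - (b - 1)/b) ∧
    (-∫ x in (0:ℝ)..1, kumaraswamyPdf a b x * Real.log (kumaraswamyPdf a b x)
      = -Real.log (a * b)
        + ((a - 1)/a) * (Real.eulerMascheroniConstant + digamma b + 1/b)
        + (b - 1)/b) := by
  have h := integral_kumaraswamyPdf_mul_log ha hb
  exact ⟨h, by rw [h]; ring⟩
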